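/- arXiv:2406.13202 — 2 statements merged into one kernel-verified Lean document; each statement's English description precedes it below -/
import Mathlib

section
/- Let p and q be distinct primes and let G = (ℤ/p) × (ℤ/p) × (ℤ/q). Then G has exactly 2(p + 3) subgroups in total, and the number of ordered pairs (H, K) of subgroups of G with K covering H in the subgroup lattice (the number of edges of the subgroup lattice graph of G) is 5p + 7. -/
/-!
Since `p` and `q` are coprime, every subgroup of `(ℤ/p)² × ℤ/q` is the product of its projections,
so the subgroup lattice is `L × S` with `L` the lattice of subspaces of the plane `𝔽_p²` and `S` the
two-element chain of subgroups of `ℤ/q`. Apart from `⊥` and `⊤`, the lattice `L` consists of the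
`p + 1` lines, each of which is both an atom and a coatom; hence `|L| = p + 3` and `L` has
`2 (p + 1)` covering pairs. A step in a product order is a step in exactly one factor, which gives
`2 (p + 1) * 2 + (p + 3) * 1 = 5 p + 7` covering pairs in `L × S`.
-/

section CoveringPairs

variable {α β : Type*} [PartialOrder α] [PartialOrder β]

/-- The edges of the Hasse diagram of a partial order, as pairs with the smaller element first. -/
def coveringPairs (α : Type*) [PartialOrder α] : Set (α × α) :=
  {x | x.1 ⋖ x.2}

theorem ncard_coveringPairs_congr (e : α ≃o β) :
    (coveringPairs α).ncard = (coveringPairs β).ncard :=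
  Nat.card_congr <| (e.toEquiv.prodCongr e.toEquiv).subtypeEquiv fun _ ↦
    (apply_covBy_apply_iff e).symm

theorem ncard_diagonal (α : Type*) : (Set.diagonal α).ncard = Nat.card α := by
  rw [← Set.range_diag, Set.ncard_range_of_injective fun _ _ h ↦ congrArg Prod.fst h]

theorem disjoint_coveringPairs_diagonal : Disjoint (coveringPairs α) (Set.diagonal α) :=
  Set.disjoint_left.2 fun _ hx ↦ CovBy.ne hx

theorem preimage_coveringPairs_prod :
    Equiv.prodProdProdComm α α β β ⁻¹' coveringPairs (α × β) =
      coveringPairs α ×ˢ Set.diagonal β ∪ Set.diagonal α ×ˢ coveringPairs β := by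
  ext ⟨⟨a₁, a₂⟩, b₁, b₂⟩
  simp [coveringPairs, Prod.mk_covBy_mk_iff, and_comm]

theorem ncard_coveringPairs_prod [Finite α] [Finite β] :
    (coveringPairs (α × β)).ncard =
      (coveringPairs α).ncard * Nat.card β + Nat.card α * (coveringPairs β).ncard := by
  have disjoint : Disjoint (coveringPairs α ×ˢ Set.diagonal β)
      (Set.diagonal α ×ˢ coveringPairs β) :=
    Set.disjoint_prod.2 (Or.inl disjoint_coveringPairs_diagonal)
  rw [← Set.ncard_preimage_of_injective_subset_range (Equiv.injective _)
      ((Equiv.prodProdProdComm α α β β).range_eq_univ ▸ Set.subset_univ _),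
    preimage_coveringPairs_prod, Set.ncard_union_eq disjoint, Set.ncard_prod, Set.ncard_prod,
    ncard_diagonal, ncard_diagonal]

end CoveringPairs

section SimpleOrder

variable (α : Type*) [PartialOrder α] [BoundedOrder α] [IsSimpleOrder α]

theorem card_of_isSimpleOrder : Nat.card α = 2 := by
  classical
  simpa using Nat.card_congr (IsSimpleOrder.equivBool (α := α))

theorem coveringPairs_of_isSimpleOrder : coveringPairs α = {(⊥, ⊤)} := by
  ext ⟨a, b⟩
  rw [Set.mem_singleton_iff, Prod.mk_inj]
  refine ⟨fun h : a ⋖ b ↦ ?_, ?_⟩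
  · exact ⟨IsSimpleOrder.eq_bot_of_lt h.lt, IsSimpleOrder.eq_top_of_lt h.lt⟩
  · rintro ⟨rfl, rfl⟩
    exact bot_covBy_top

end SimpleOrder

section HeightTwo

variable {α : Type*} [PartialOrder α] [BoundedOrder α] [IsAtomic α]

/-- Having the same atoms and coatoms encodes height two: it excludes the two-element chain, whose
top is an atom but not a coatom. -/
theorem compl_setOf_isAtom_of_isAtom_iff_isCoatom (h : ∀ a : α, IsAtom a ↔ IsCoatom a) :
    {a : α | IsAtom a}ᶜ = {⊥, ⊤} := by
  ext a
  simp only [Set.mem_compl_iff, Set.mem_ofPred_eq, Set.mem_insert_iff, Set.mem_singleton_iff]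
  constructor
  · intro ha
    rcases eq_bot_or_exists_atom_le a with rfl | ⟨b, hb, hba⟩
    · exact Or.inl rfl
    · exact Or.inr (((h b).1 hb).2 a (hba.lt_of_ne (by rintro rfl; exact ha hb)))
  · rintro (rfl | rfl) ha
    · exact ha.1 rfl
    · exact ((h ⊤).1 ha).1 rfl

theorem card_of_isAtom_iff_isCoatom [Finite α] [Nontrivial α]
    (h : ∀ a : α, IsAtom a ↔ IsCoatom a) :
    Nat.card α = {a : α | IsAtom a}.ncard + 2 := by
  rw [← Set.ncard_add_ncard_compl {a : α | IsAtom a}, compl_setOf_isAtom_of_isAtom_iff_isCoatom h,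
    Set.ncard_pair bot_ne_top]

theorem coveringPairs_of_isAtom_iff_isCoatom (h : ∀ a : α, IsAtom a ↔ IsCoatom a) :
    coveringPairs α = (⊥, ·) '' {a : α | IsAtom a} ∪ (·, ⊤) '' {a : α | IsAtom a} := by
  ext ⟨a, b⟩
  constructor
  · intro (hab : a ⋖ b)
    by_cases ha : IsAtom a
    · exact Or.inr ⟨a, ha, by rw [((h a).1 ha).2 b hab.lt]⟩
    · rcases (compl_setOf_isAtom_of_isAtom_iff_isCoatom h).subset ha with rfl | rfl
      · exact Or.inl ⟨b, bot_covBy_iff.1 hab, rfl⟩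
      · exact absurd hab.lt not_top_lt
  · rintro (⟨c, hc, hcab⟩ | ⟨c, hc, hcab⟩) <;> cases hcab
    · exact bot_covBy_iff.2 hc
    · exact covBy_top_iff.2 ((h _).1 hc)

theorem ncard_coveringPairs_of_isAtom_iff_isCoatom [Finite α]
    (h : ∀ a : α, IsAtom a ↔ IsCoatom a) :
    (coveringPairs α).ncard = 2 * {a : α | IsAtom a}.ncard := by
  have disjoint : Disjoint ((⊥, ·) '' {a : α | IsAtom a}) ((·, ⊤) '' {a : α | IsAtom a}) := by
    rw [Set.disjoint_left]
    rintro _ ⟨a, -, rfl⟩ ⟨b, hb : IsAtom b, hab⟩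
    exact hb.1 (congrArg Prod.fst hab)
  rw [coveringPairs_of_isAtom_iff_isCoatom h, Set.ncard_union_eq disjoint,
    Set.ncard_image_of_injective _ (Prod.mk_right_injective ⊥),
    Set.ncard_image_of_injective _ (Prod.mk_left_injective ⊤), two_mul]

end HeightTwo

section Plane

variable {K V : Type*} [AddCommGroup V]

theorem isAtom_iff_isCoatom_of_finrank_eq_two [DivisionRing K] [Module K V]
    (h : Module.finrank K V = 2) (W : Submodule K V) : IsAtom W ↔ IsCoatom W := by
  have : Module.Finite K V := Module.finite_of_finrank_eq_succ h
  have rank_nullity := Submodule.finrank_quotient_add_finrank W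
  rw [Submodule.isAtom_iff_finrank_eq_one, ← isSimpleModule_iff_isCoatom,
    isSimpleModule_iff_finrank_eq_one]
  lia

variable [Field K] [Finite K] [Module K V]

theorem ncard_isAtom_submodule_of_finrank_eq_two (h : Module.finrank K V = 2) :
    {W : Submodule K V | IsAtom W}.ncard = Nat.card K + 1 := by
  simp only [Submodule.isAtom_iff_finrank_eq_one]
  rw [← Projectivization.card_of_finrank_two K V h]
  exact (Nat.card_congr (Projectivization.equivSubmodule K V)).symm

theorem card_submodule_of_finrank_eq_two (h : Module.finrank K V = 2) :
    Nat.card (Submodule K V) = Nat.card K + 3 := by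
  have : Module.Finite K V := Module.finite_of_finrank_eq_succ h
  have : Finite V := Module.finite_of_finite K
  have : Nontrivial V := Module.nontrivial_of_finrank_eq_succ h
  rw [card_of_isAtom_iff_isCoatom (isAtom_iff_isCoatom_of_finrank_eq_two h),
    ncard_isAtom_submodule_of_finrank_eq_two h]

theorem ncard_coveringPairs_submodule_of_finrank_eq_two (h : Module.finrank K V = 2) :
    (coveringPairs (Submodule K V)).ncard = 2 * (Nat.card K + 1) := by
  have : Module.Finite K V := Module.finite_of_finrank_eq_succ h
  have : Finite V := Module.finite_of_finite K
  have : Nontrivial V := Module.nontrivial_of_finrank_eq_succ h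
  rw [ncard_coveringPairs_of_isAtom_iff_isCoatom (isAtom_iff_isCoatom_of_finrank_eq_two h),
    ncard_isAtom_submodule_of_finrank_eq_two h]

variable {p : ℕ} [Fact p.Prime] [Module (ZMod p) V]

theorem card_addSubgroup_of_finrank_eq_two (h : Module.finrank (ZMod p) V = 2) :
    Nat.card (AddSubgroup V) = p + 3 := by
  rw [Nat.card_congr (AddSubgroup.toZModSubmodule p).toEquiv, card_submodule_of_finrank_eq_two h,
    Nat.card_zmod]

theorem ncard_coveringPairs_addSubgroup_of_finrank_eq_two (h : Module.finrank (ZMod p) V = 2) :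
    (coveringPairs (AddSubgroup V)).ncard = 2 * (p + 1) := by
  rw [ncard_coveringPairs_congr (AddSubgroup.toZModSubmodule p),
    ncard_coveringPairs_submodule_of_finrank_eq_two h, Nat.card_zmod]

end Plane

section CoprimeExponents

variable {G H : Type*} [Group G] [Group H]

@[to_additive]
theorem exists_pow_eq_mk_fst_one
    (h : (Monoid.exponent G).Coprime (Monoid.exponent H)) :
    ∃ n : ℕ, ∀ x : G × H, x ^ n = (x.1, 1) := by
  obtain ⟨n, hG, hH⟩ := Nat.chineseRemainder h 1 0
  refine ⟨n, fun x ↦ Prod.ext ?_ ?_⟩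
  · simpa using pow_eq_pow_iff_modEq.2 (hG.of_dvd (Monoid.order_dvd_exponent x.1))
  · simpa using pow_eq_pow_iff_modEq.2 (hH.of_dvd (Monoid.order_dvd_exponent x.2))

@[to_additive addSubgroup_map_fst_prod]
theorem subgroup_map_fst_prod (A : Subgroup G) (B : Subgroup H) :
    (A.prod B).map (MonoidHom.fst G H) = A :=
  SetLike.coe_injective (Set.fst_image_prod _ ⟨1, B.one_mem⟩)

@[to_additive addSubgroup_map_snd_prod]
theorem subgroup_map_snd_prod (A : Subgroup G) (B : Subgroup H) :
    (A.prod B).map (MonoidHom.snd G H) = B :=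
  SetLike.coe_injective (Set.snd_image_prod ⟨1, A.one_mem⟩ _)

@[to_additive addSubgroup_map_fst_prod_map_snd_of_coprime_exponent]
theorem subgroup_map_fst_prod_map_snd_of_coprime_exponent
    (h : (Monoid.exponent G).Coprime (Monoid.exponent H)) (J : Subgroup (G × H)) :
    (J.map (MonoidHom.fst G H)).prod (J.map (MonoidHom.snd G H)) = J := by
  obtain ⟨n, hn⟩ := exists_pow_eq_mk_fst_one h
  have fst_mem {x : G × H} (hx : x ∈ J) : (x.1, 1) ∈ J := hn x ▸ J.pow_mem hx n
  have snd_mem {x : G × H} (hx : x ∈ J) : (1, x.2) ∈ J := by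
    simpa [Prod.mul_def] using J.mul_mem (J.inv_mem (fst_mem hx)) hx
  refine le_antisymm (Subgroup.prod_le_iff.2 ⟨?_, ?_⟩) (Subgroup.le_prod_iff.2 ⟨le_rfl, le_rfl⟩)
  · rintro _ ⟨_, ⟨x, hx, rfl⟩, rfl⟩
    exact fst_mem hx
  · rintro _ ⟨_, ⟨x, hx, rfl⟩, rfl⟩
    exact snd_mem hx

/-- The isomorphism, for groups of coprime exponents, from pairs of subgroups of the factors to
subgroups of the product. -/
@[to_additive addSubgroupProdOrderIsoOfCoprimeExponent]
def subgroupProdOrderIsoOfCoprimeExponent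
    (h : (Monoid.exponent G).Coprime (Monoid.exponent H)) :
    Subgroup G × Subgroup H ≃o Subgroup (G × H) :=
  Equiv.toOrderIso
    { toFun A := A.1.prod A.2
      invFun J := (J.map (MonoidHom.fst G H), J.map (MonoidHom.snd G H))
      left_inv A := Prod.ext (subgroup_map_fst_prod A.1 A.2) (subgroup_map_snd_prod A.1 A.2)
      right_inv := subgroup_map_fst_prod_map_snd_of_coprime_exponent h }
    (fun _ _ hAB ↦ Subgroup.prod_mono hAB.1 hAB.2)
    (fun _ _ hJK ↦ ⟨Subgroup.map_mono hJK, Subgroup.map_mono hJK⟩)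

end CoprimeExponents

theorem stmt_15 (p q : ℕ) (hp : p.Prime) (hq : q.Prime) (hpq : p ≠ q) :
    Nat.card (AddSubgroup (ZMod p × ZMod p × ZMod q)) = 2 * (p + 3) ∧
    Nat.card {HK : AddSubgroup (ZMod p × ZMod p × ZMod q) ×
        AddSubgroup (ZMod p × ZMod p × ZMod q) // HK.1 ⋖ HK.2} = 5 * p + 7 := by
  have : Fact p.Prime := ⟨hp⟩
  have : Fact q.Prime := ⟨hq⟩
  have finrank_plane : Module.finrank (ZMod p) (ZMod p × ZMod p) = 2 := by simp
  have coprime : (AddMonoid.exponent (ZMod p × ZMod p)).Coprime (AddMonoid.exponent (ZMod q)) := by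
    simpa [AddMonoid.exponent_prod, ZMod.exponent] using (Nat.coprime_primes hp hq).2 hpq
  let e : AddSubgroup (ZMod p × ZMod p) × AddSubgroup (ZMod q) ≃o
      AddSubgroup (ZMod p × ZMod p × ZMod q) :=
    (addSubgroupProdOrderIsoOfCoprimeExponent coprime).trans AddEquiv.prodAssoc.mapAddSubgroup
  have card_plane := card_addSubgroup_of_finrank_eq_two finrank_plane
  constructor
  · rw [← Nat.card_congr e.toEquiv, Nat.card_prod, card_plane, card_of_isSimpleOrder, mul_comm]
  · change (coveringPairs _).ncard = _
    rw [← ncard_coveringPairs_congr e, ncard_coveringPairs_prod, card_plane,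
      ncard_coveringPairs_addSubgroup_of_finrank_eq_two finrank_plane,
      coveringPairs_of_isSimpleOrder, Set.ncard_singleton, card_of_isSimpleOrder]
    ring
end

section
/- Let q be a prime with q ≠ 2 and let G = (ℤ/4) × (ℤ/4) × (ℤ/q). Then G has exactly 30 subgroups, and the number of ordered pairs (H, K) of subgroups of G with K covering H in the subgroup lattice (the number of edges of the subgroup lattice graph of G) is 63. -/
/-!
Since `4` and `q` are coprime, the subgroup lattice of `ZMod 4 × ZMod 4 × ZMod q` is the product
of those of `ZMod 4 × ZMod 4` and `ZMod q`, and a cover in a product of two orders is a cover in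
one factor paired with an element of the other. The lattice of `ZMod q` has two elements and one
cover. In `ZMod 4 × ZMod 4` every subgroup is spanned by the rows `(a, b)`, `(0, c)` of an upper
triangular matrix, which yields a finite list of all `15` subgroups; as covers between subgroups of
an abelian group are the inclusions of prime index, `24` covers are read off that list. The counts
are therefore `15 * 2 = 30` and `24 * 2 + 15 * 1 = 63`.
-/

section NumCovers

/-- The number of edges of the Hasse diagram of `α`, that is, of pairs `(a, b)` such that `b`
covers `a`; as for every `Nat.card`, the value is `0` if there are infinitely many of them. -/
noncomputable def numCovers (α : Type*) [Preorder α] : ℕ :=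
  Nat.card {p : α × α // p.1 ⋖ p.2}

theorem numCovers_congr {α β : Type*} [Preorder α] [Preorder β] (e : α ≃o β) :
    numCovers α = numCovers β :=
  Nat.card_congr <| (e.toEquiv.prodCongr e.toEquiv).subtypeEquiv fun _ ↦
    (apply_covBy_apply_iff e).symm

theorem numCovers_prod (α β : Type*) [PartialOrder α] [PartialOrder β] [Finite α] [Finite β] :
    numCovers (α × β) = numCovers α * Nat.card β + Nat.card α * numCovers β := by
  let f : {p : α × α // p.1 ⋖ p.2} × β ⊕ α × {p : β × β // p.1 ⋖ p.2} →
      {p : (α × β) × (α × β) // p.1 ⋖ p.2} :=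
    Sum.elim (fun x ↦ ⟨((x.1.1.1, x.2), (x.1.1.2, x.2)), Prod.mk_covBy_mk_iff_left.2 x.1.2⟩)
      fun x ↦ ⟨((x.1, x.2.1.1), (x.1, x.2.1.2)), Prod.mk_covBy_mk_iff_right.2 x.2.2⟩
  have f_bijective : f.Bijective := by
    refine ⟨Function.Injective.sumElim ?_ ?_ ?_, ?_⟩
    · rintro ⟨⟨⟨a, a'⟩, _⟩, b⟩ ⟨⟨⟨c, c'⟩, _⟩, d⟩ heq
      simp_all
    · rintro ⟨a, ⟨⟨b, b'⟩, _⟩⟩ ⟨c, ⟨⟨d, d'⟩, _⟩⟩ heq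
      simp_all
    · rintro ⟨⟨⟨a, a'⟩, ha⟩, b⟩ ⟨c, ⟨⟨d, d'⟩, _⟩⟩ heq
      exact ha.ne (by simp_all)
    · rintro ⟨⟨⟨a, b⟩, ⟨a', b'⟩⟩, h⟩
      obtain ⟨ha, rfl : b = b'⟩ | ⟨hb, rfl : a = a'⟩ := Prod.covBy_iff.1 h
      · exact ⟨.inl (⟨(a, a'), ha⟩, b), rfl⟩
      · exact ⟨.inr (a, ⟨(b, b'), hb⟩), rfl⟩
  rw [numCovers, ← Nat.card_congr (Equiv.ofBijective f f_bijective), Nat.card_sum, Nat.card_prod,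
    Nat.card_prod, numCovers, numCovers]

variable (α : Type*) [PartialOrder α] [BoundedOrder α] [IsSimpleOrder α]

theorem numCovers_of_isSimpleOrder : numCovers α = 1 := by
  classical
  rw [numCovers_congr (IsSimpleOrder.orderIsoBool (α := α)), numCovers, Nat.card_eq_fintype_card]
  decide

end NumCovers

section CoprimeProduct

variable {G H : Type*} [AddGroup G] [AddGroup H]

theorem exists_nsmul_eq_self_and_nsmul_eq_zero
    (hcop : (AddMonoid.exponent G).Coprime (AddMonoid.exponent H)) :
    ∃ n : ℕ, (∀ g : G, n • g = g) ∧ ∀ h : H, n • h = 0 := by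
  obtain ⟨n, hG, hH⟩ := Nat.chineseRemainder hcop 1 0
  refine ⟨n, fun g ↦ ?_, fun h ↦ ?_⟩
  · simpa using nsmul_eq_nsmul_iff_modEq.2 (hG.of_dvd (AddMonoid.addOrder_dvd_exponent g))
  · simpa using nsmul_eq_nsmul_iff_modEq.2 (hH.of_dvd (AddMonoid.addOrder_dvd_exponent h))

theorem map_fst_prod_map_snd_eq_of_coprime
    (hcop : (AddMonoid.exponent G).Coprime (AddMonoid.exponent H)) (K : AddSubgroup (G × H)) :
    (K.map (AddMonoidHom.fst G H)).prod (K.map (AddMonoidHom.snd G H)) = K := by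
  obtain ⟨n, hG, hH⟩ := exists_nsmul_eq_self_and_nsmul_eq_zero hcop
  have fst_mem {g : G} {h : H} (hx : (g, h) ∈ K) : (g, 0) ∈ K := by
    simpa [hG, hH] using K.nsmul_mem hx n
  have snd_mem {g : G} {h : H} (hx : (g, h) ∈ K) : (0, h) ∈ K := by
    simpa using K.add_mem (K.neg_mem (fst_mem hx)) hx
  refine le_antisymm ?_ (AddSubgroup.le_prod_iff.2 ⟨le_rfl, le_rfl⟩)
  rintro ⟨_, _⟩ ⟨⟨x, hx, rfl⟩, ⟨y, hy, rfl⟩⟩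
  simpa using K.add_mem (fst_mem hx) (snd_mem hy)

/-- The lattice of subgroups of a product of groups with coprime exponents is the product of the
lattices of subgroups of the factors. -/
def addSubgroupProdOrderIso
    (hcop : (AddMonoid.exponent G).Coprime (AddMonoid.exponent H)) :
    AddSubgroup (G × H) ≃o AddSubgroup G × AddSubgroup H where
  toFun K := (K.map (AddMonoidHom.fst G H), K.map (AddMonoidHom.snd G H))
  invFun L := L.1.prod L.2
  left_inv := map_fst_prod_map_snd_eq_of_coprime hcop
  right_inv L := by
    ext x
    · simpa [AddSubgroup.mem_prod] using fun _ ↦ ⟨0, L.2.zero_mem⟩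
    · simpa [AddSubgroup.mem_prod] using fun _ ↦ ⟨0, L.1.zero_mem⟩
  map_rel_iff' {K L} := by
    rw [Equiv.coe_fn_mk, Prod.mk_le_mk, ← AddSubgroup.le_prod_iff,
      map_fst_prod_map_snd_eq_of_coprime hcop]

end CoprimeProduct

section PrimeIndex

variable {G : Type*} [AddCommGroup G]

theorem isSimpleOrder_addSubgroup_iff : IsSimpleOrder (AddSubgroup G) ↔ IsSimpleAddGroup G :=
  ⟨fun _ ↦ { toNontrivial := AddSubgroup.nontrivial_iff.1 inferInstance
             eq_bot_or_eq_top_of_normal := fun H _ ↦ eq_bot_or_eq_top H },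
    fun _ ↦ inferInstance⟩

theorem isCoatom_iff_index_prime {N : AddSubgroup G} : IsCoatom N ↔ N.index.Prime :=
  let e : AddSubgroup (G ⧸ N) ≃o Set.Ici N := QuotientAddGroup.comapMk'OrderIso N
  calc IsCoatom N ↔ IsSimpleOrder (Set.Ici N) := Set.isSimpleOrder_Ici_iff_isCoatom.symm
    _ ↔ IsSimpleOrder (AddSubgroup (G ⧸ N)) := e.isSimpleOrder_iff.symm
    _ ↔ IsSimpleAddGroup (G ⧸ N) := isSimpleOrder_addSubgroup_iff
    _ ↔ N.index.Prime := AddCommGroup.is_simple_iff_prime_card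

theorem covBy_iff_relIndex_prime {H K : AddSubgroup G} (hHK : H ≤ K) :
    H ⋖ K ↔ (H.relIndex K).Prime :=
  let e : AddSubgroup K ≃o Set.Iic K := AddSubgroup.MapSubtype.orderIso K
  have e_symm : e.symm ⟨H, hHK⟩ = H.addSubgroupOf K := rfl
  calc H ⋖ K ↔ IsCoatom (⟨H, hHK⟩ : Set.Iic K) := covBy_iff_coatom_Iic hHK
    _ ↔ IsCoatom (H.addSubgroupOf K) := by rw [← e_symm, e.symm.isCoatom_iff]
    _ ↔ (H.relIndex K).Prime := isCoatom_iff_index_prime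

theorem relIndex_eq_card_div_card {A : Type*} [AddGroup A] {H K : AddSubgroup A} [Finite H]
    (hHK : H ≤ K) : H.relIndex K = Nat.card K / Nat.card H := by
  refine (Nat.div_eq_of_eq_mul_right Nat.card_pos ?_).symm
  simpa using (AddSubgroup.relIndex_mul_relIndex ⊥ H K bot_le hHK).symm

theorem covBy_iff_card_div_card_prime {H K : AddSubgroup G} [Finite H] :
    H ⋖ K ↔ H ≤ K ∧ (Nat.card K / Nat.card H).Prime := by
  rw [← and_iff_right_of_imp CovBy.le]
  refine and_congr_right fun hHK ↦ ?_
  rw [covBy_iff_relIndex_prime hHK, relIndex_eq_card_div_card hHK]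

end PrimeIndex

section RowSpan

variable {R : Type*} [Ring R]

theorem exists_eq_span_upperTriangular [IsPrincipalIdealRing R] (K : Submodule R (R × R)) :
    ∃ a b c : R, K = Submodule.span R {(a, b), (0, c)} := by
  obtain ⟨a, ha⟩ := (IsPrincipalIdealRing.principal (K.map (LinearMap.fst R R R))).principal
  obtain ⟨c, hc⟩ := (IsPrincipalIdealRing.principal (K.comap (LinearMap.inr R R R))).principal
  obtain ⟨⟨a', b⟩, hab, haa'⟩ : a ∈ K.map (LinearMap.fst R R R) :=
    ha ▸ Submodule.mem_span_singleton_self a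
  obtain rfl : a' = a := haa'
  have hc_mem : c ∈ K.comap (LinearMap.inr R R R) := hc ▸ Submodule.mem_span_singleton_self c
  refine ⟨a', b, c, le_antisymm ?_ (Submodule.span_le.2 (Set.pair_subset hab hc_mem))⟩
  rintro ⟨x, y⟩ hxy
  obtain ⟨r, rfl⟩ : ∃ r : R, r • a' = x :=
    Submodule.mem_span_singleton.1 (ha ▸ Submodule.mem_map_of_mem hxy)
  have hsub : y - r • b ∈ K.comap (LinearMap.inr R R R) := by
    simpa using K.sub_mem hxy (K.smul_mem r hab)
  obtain ⟨s, hs⟩ : ∃ s : R, s • c = y - r • b := Submodule.mem_span_singleton.1 (hc ▸ hsub)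
  refine Submodule.mem_span_pair.2 ⟨r, s, Prod.ext (by simp) ?_⟩
  rw [Prod.snd_add, Prod.smul_snd, Prod.smul_snd, hs, add_sub_cancel]

variable [Fintype R] [DecidableEq R]

/-- The row space of the upper triangular matrix `!![a, b; 0, c]`, as a list of its elements. -/
def rowSpan (a b c : R) : Finset (R × R) :=
  Finset.univ.image fun r : R × R ↦ r.1 • (a, b) + r.2 • (0, c)

theorem coe_rowSpan (a b c : R) :
    (rowSpan a b c : Set (R × R)) = Submodule.span R {(a, b), (0, c)} := by
  ext x
  simp only [rowSpan, Finset.coe_image, Finset.coe_univ, Set.image_univ, Set.mem_range,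
    Prod.exists, SetLike.mem_coe, Submodule.mem_span_pair]

variable (R) in
/-- The row spaces of all upper triangular matrices of size two, without repetition. -/
def rowSpans : Finset (Finset (R × R)) :=
  Finset.univ.image fun t : R × R × R ↦ rowSpan t.1 t.2.1 t.2.2

theorem mem_rowSpans_iff [IsPrincipalIdealRing R] {S : Finset (R × R)} :
    S ∈ rowSpans R ↔ ∃ K : Submodule R (R × R), (K : Set (R × R)) = S := by
  simp only [rowSpans, Finset.mem_image, Finset.mem_univ, true_and, Prod.exists]
  constructor
  · rintro ⟨a, b, c, rfl⟩
    exact ⟨_, (coe_rowSpan a b c).symm⟩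
  · rintro ⟨K, hK⟩
    obtain ⟨a, b, c, rfl⟩ := exists_eq_span_upperTriangular K
    exact ⟨a, b, c, Finset.coe_injective ((coe_rowSpan a b c).trans hK)⟩

variable (R) in
/-- The submodules of `R × R` over a finite principal ideal ring, listed by their elements. -/
noncomputable def submoduleOrderIsoRowSpans [IsPrincipalIdealRing R] :
    Submodule R (R × R) ≃o rowSpans R :=
  RelIso.ofSurjective
    (OrderEmbedding.ofMapLEIff
      (fun K ↦ ⟨(Set.toFinite (K : Set (R × R))).toFinset, mem_rowSpans_iff.2 ⟨K, by simp⟩⟩)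
      (by simp [← Finset.coe_subset]))
    fun ⟨S, hS⟩ ↦ by
      obtain ⟨K, hK⟩ := mem_rowSpans_iff.1 hS
      exact ⟨K, by simp [hK]⟩

theorem card_submoduleOrderIsoRowSpans [IsPrincipalIdealRing R] (K : Submodule R (R × R)) :
    (submoduleOrderIsoRowSpans R K : Finset (R × R)).card = Nat.card K :=
  (Nat.card_eq_card_finite_toFinset _).symm

end RowSpan

section ZModSquare

variable (n : ℕ)

instance : IsPrincipalIdealRing (ZMod n) :=
  .of_surjective (Int.castRingHom (ZMod n)) ZMod.intCast_surjective

variable [NeZero n]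

/-- The subgroups of `ZMod n × ZMod n`, listed by their elements. -/
noncomputable def addSubgroupOrderIsoRowSpans :
    AddSubgroup (ZMod n × ZMod n) ≃o rowSpans (ZMod n) :=
  (AddSubgroup.toZModSubmodule n).trans (submoduleOrderIsoRowSpans (ZMod n))

theorem card_addSubgroup_zmod_prod_self :
    Nat.card (AddSubgroup (ZMod n × ZMod n)) = (rowSpans (ZMod n)).card := by
  rw [Nat.card_congr (addSubgroupOrderIsoRowSpans n).toEquiv, Nat.card_eq_fintype_card,
    Fintype.card_coe]

theorem numCovers_addSubgroup_zmod_prod_self :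
    numCovers (AddSubgroup (ZMod n × ZMod n)) =
      Fintype.card {p : rowSpans (ZMod n) × rowSpans (ZMod n) //
        p.1 ≤ p.2 ∧ (p.2.1.card / p.1.1.card).Prime} := by
  let e := addSubgroupOrderIsoRowSpans n
  have card_e (K : AddSubgroup (ZMod n × ZMod n)) : (e K).1.card = Nat.card K :=
    card_submoduleOrderIsoRowSpans (AddSubgroup.toZModSubmodule n K)
  rw [numCovers, ← Nat.card_eq_fintype_card]
  refine Nat.card_congr ((e.toEquiv.prodCongr e.toEquiv).subtypeEquiv fun ⟨H, K⟩ ↦ ?_)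
  change H ⋖ K ↔ e H ≤ e K ∧ ((e K).1.card / (e H).1.card).Prime
  rw [covBy_iff_card_div_card_prime, e.le_iff_le, card_e, card_e]

theorem card_addSubgroup_zmod_four_prod_self :
    Nat.card (AddSubgroup (ZMod 4 × ZMod 4)) = 15 := by
  rw [card_addSubgroup_zmod_prod_self]
  decide +kernel

theorem numCovers_addSubgroup_zmod_four_prod_self :
    numCovers (AddSubgroup (ZMod 4 × ZMod 4)) = 24 := by
  rw [numCovers_addSubgroup_zmod_prod_self]
  decide +kernel

end ZModSquare

theorem coprime_exponent_zmod_four_prod_self {q : ℕ} (hq : q.Prime) (hq2 : q ≠ 2) :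
    (AddMonoid.exponent (ZMod 4 × ZMod 4)).Coprime (AddMonoid.exponent (ZMod q)) := by
  rw [AddMonoid.exponent_prod, ZMod.exponent, ZMod.exponent, lcm_same]
  exact Nat.Coprime.pow_left 2 ((Nat.coprime_primes Nat.prime_two hq).2 hq2.symm)

theorem stmt_17 (q : ℕ) (hq : q.Prime) (hq2 : q ≠ 2) :
    Nat.card (AddSubgroup (ZMod 4 × ZMod 4 × ZMod q)) = 30 ∧
    Nat.card {HK : AddSubgroup (ZMod 4 × ZMod 4 × ZMod q) ×
        AddSubgroup (ZMod 4 × ZMod 4 × ZMod q) // HK.1 ⋖ HK.2} = 63 := by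
  have : Fact q.Prime := ⟨hq⟩
  let e : AddSubgroup (ZMod 4 × ZMod 4 × ZMod q) ≃o
      AddSubgroup (ZMod 4 × ZMod 4) × AddSubgroup (ZMod q) :=
    AddEquiv.prodAssoc.symm.mapAddSubgroup.trans
      (addSubgroupProdOrderIso (coprime_exponent_zmod_four_prod_self hq hq2))
  constructor
  · rw [Nat.card_congr e.toEquiv, Nat.card_prod, card_addSubgroup_zmod_four_prod_self,
      card_of_isSimpleOrder]
  · change numCovers (AddSubgroup (ZMod 4 × ZMod 4 × ZMod q)) = 63
    rw [numCovers_congr e, numCovers_prod, card_addSubgroup_zmod_four_prod_self,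
      numCovers_addSubgroup_zmod_four_prod_self, card_of_isSimpleOrder,
      numCovers_of_isSimpleOrder]
end
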